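/- Let 𝔥 be a separable, infinite dimensional complex Hilbert space and ψ a unit vector in 𝔥, and let d_ψ(p,q) := ⟨pψ, qψ⟩ for projections p,q on 𝔥. Then there is NO trace class operator 𝔛 on 𝔥 ⊗ 𝔥 such that d_ψ(p,q) = tr((p ⊗ q)𝔛) for all projections p,q on 𝔥; equivalently, d_ψ is not tensor bounded. -/

import Mathlib

/- Common background definitions: decoherence functionals on the projection
lattice of a complex Hilbert space, boundedness/additivity notions, trace class
operators, and an axiomatisation of the Hilbert space tensor product
`𝔥 ⊗ 𝔥` together with the operator tensor product. -/

noncomputable section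

open scoped ComplexInnerProductSpace ComplexOrder
open ContinuousLinearMap

universe u

variable {E : Type u} [NormedAddCommGroup E] [InnerProductSpace ℂ E] [CompleteSpace E]
variable {G : Type u} [NormedAddCommGroup G] [InnerProductSpace ℂ G] [CompleteSpace G]

/-- `p` is an orthogonal projection on a Hilbert space. -/
def IsOrthoProj (p : E →L[ℂ] E) : Prop :=
  IsIdempotentElem p ∧ IsSelfAdjoint p

/-- `p` is an operator of finite rank. -/
def HasFiniteRank (p : E →L[ℂ] E) : Prop :=
  FiniteDimensional ℂ ↥(LinearMap.range (p : E →ₗ[ℂ] E))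

/-- A decoherence functional on the lattice of projections `P(𝔥)`
(modelled as a function on all pairs of bounded operators whose defining
properties refer only to its values at pairs of orthogonal projections). -/
structure IsDecoherenceFunctional (d : (E →L[ℂ] E) → (E →L[ℂ] E) → ℂ) : Prop where
  hermitian : ∀ p q, IsOrthoProj p → IsOrthoProj q → d p q = starRingEnd ℂ (d q p)
  pos : ∀ p, IsOrthoProj p → 0 ≤ d p p
  normalized : d 1 1 = 1
  orthoadd : ∀ p₁ p₂ q, IsOrthoProj p₁ → IsOrthoProj p₂ → IsOrthoProj q →
    p₁ * p₂ = 0 → d (p₁ + p₂) q = d p₁ q + d p₂ q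

/-- A decoherence functional is bounded if `{|d(p,q)|}` is a bounded set. -/
def DFBounded (d : (E →L[ℂ] E) → (E →L[ℂ] E) → ℂ) : Prop :=
  ∃ C : ℝ, ∀ p q, IsOrthoProj p → IsOrthoProj q → ‖d p q‖ ≤ C

/-- Countable additivity of a decoherence functional: for every countable
pairwise orthogonal family of projections summing (strongly) to `P`,
`d (P, q) = ∑ d (pᵢ, q)`. -/
def DFCountablyAdditive (d : (E →L[ℂ] E) → (E →L[ℂ] E) → ℂ) : Prop :=
  ∀ (p : ℕ → E →L[ℂ] E) (P q : E →L[ℂ] E),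
    (∀ i, IsOrthoProj (p i)) → IsOrthoProj P → IsOrthoProj q →
    (∀ i j, i ≠ j → p i * p j = 0) →
    (∀ x : E, HasSum (fun i => p i x) (P x)) →
    HasSum (fun i => d (p i) q) (d P q)

/-- Complete additivity of a decoherence functional. -/
def DFCompletelyAdditive (d : (E →L[ℂ] E) → (E →L[ℂ] E) → ℂ) : Prop :=
  ∀ (ι : Type u) (p : ι → E →L[ℂ] E) (P q : E →L[ℂ] E),
    (∀ i, IsOrthoProj (p i)) → IsOrthoProj P → IsOrthoProj q →
    (∀ i j, i ≠ j → p i * p j = 0) →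
    (∀ x : E, HasSum (fun i => p i x) (P x)) →
    HasSum (fun i => d (p i) q) (d P q)

/-- A bilinear form `D` on `B(𝔥) × B(𝔥)` is bounded. -/
def IsBoundedBilinear (D : (E →L[ℂ] E) →ₗ[ℂ] (E →L[ℂ] E) →ₗ[ℂ] ℂ) : Prop :=
  ∃ C : ℝ, ∀ x y : E →L[ℂ] E, ‖D x y‖ ≤ C * ‖x‖ * ‖y‖

/-- The bilinear form `D` extends the decoherence functional `d`. -/
def ExtendsDF (D : (E →L[ℂ] E) →ₗ[ℂ] (E →L[ℂ] E) →ₗ[ℂ] ℂ)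
    (d : (E →L[ℂ] E) → (E →L[ℂ] E) → ℂ) : Prop :=
  ∀ p q, IsOrthoProj p → IsOrthoProj q → D p q = d p q

/-- `T` is a trace class operator (via the standard characterisation: the sums
`∑ |⟪eᵢ, T fᵢ⟫|` over finite orthonormal families are uniformly bounded). -/
def IsTraceClass (T : E →L[ℂ] E) : Prop :=
  ∃ C : ℝ, ∀ (n : ℕ) (e f : Fin n → E), Orthonormal ℂ e → Orthonormal ℂ f →
    ∑ i, ‖⟪e i, T (f i)⟫‖ ≤ C

/-- The trace of an operator computed in the Hilbert basis `b` (for a trace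
class operator this is basis independent and is the usual trace). -/
def traceAlong {ι : Type*} (b : HilbertBasis ι ℂ E) (T : E →L[ℂ] E) : ℂ :=
  ∑' i, ⟪b i, T (b i)⟫

/-- The rank one orthogonal projection `p_ξ` onto the span of a unit vector `ξ`. -/
def rankOneProj (ξ : E) : E →L[ℂ] E :=
  (innerSL ℂ ξ).smulRight ξ

/-- An axiomatisation of the Hilbert space tensor product `G = E ⊗ E`:
a bilinear map `tmul` into `G` multiplying inner products and having dense span. -/
structure HilbertTensorProduct (E G : Type u) [NormedAddCommGroup E]
    [InnerProductSpace ℂ E] [NormedAddCommGroup G] [InnerProductSpace ℂ G] :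
    Type u where
  tmul : E →ₗ[ℂ] E →ₗ[ℂ] G
  inner_tmul : ∀ a b c d : E, ⟪tmul a b, tmul c d⟫ = ⟪a, c⟫ * ⟪b, d⟫
  dense_span : Dense (↑(Submodule.span ℂ (Set.range fun z : E × E => tmul z.1 z.2)) : Set G)

/-- The algebraic tensor product `E ⊗_alg E`, viewed as a (dense) subspace of `G`. -/
def HilbertTensorProduct.algSpan (J : HilbertTensorProduct E G) : Submodule ℂ G :=
  Submodule.span ℂ (Set.range fun z : E × E => J.tmul z.1 z.2)

/-- The Hilbert space tensor product together with the operator tensor product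
`(x, y) ↦ x ⊗ y` on bounded operators. -/
structure OperatorTensor (E G : Type u) [NormedAddCommGroup E]
    [InnerProductSpace ℂ E] [NormedAddCommGroup G] [InnerProductSpace ℂ G]
    extends HilbertTensorProduct E G where
  op : (E →L[ℂ] E) → (E →L[ℂ] E) → (G →L[ℂ] G)
  op_tmul : ∀ (x y : E →L[ℂ] E) (a b : E), op x y (tmul a b) = tmul (x a) (y b)

/-- The algebraic tensor product `K(𝔥) • K(𝔥)`: the span in `B(G)` of the
operators `x ⊗ y` with `x, y` compact. -/
def OperatorTensor.compactSpan (J : OperatorTensor E G) : Submodule ℂ (G →L[ℂ] G) :=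
  Submodule.span ℂ {T | ∃ x y : E →L[ℂ] E,
    IsCompactOperator (⇑x) ∧ IsCompactOperator (⇑y) ∧ T = J.op x y}

/-- `β` is the linear functional on `K(𝔥) • K(𝔥)` induced by the bilinear form
`D`, i.e. `β (x ⊗ y) = D (x, y)` for compact `x, y`. -/
def IsBetaFor (J : OperatorTensor E G)
    (D : (E →L[ℂ] E) →ₗ[ℂ] (E →L[ℂ] E) →ₗ[ℂ] ℂ)
    (β : ↥J.compactSpan →ₗ[ℂ] ℂ) : Prop :=
  ∀ x y : E →L[ℂ] E, IsCompactOperator (⇑x) → IsCompactOperator (⇑y) →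
    ∀ hm : J.op x y ∈ J.compactSpan, β ⟨J.op x y, hm⟩ = D x y

/-- `β` is bounded for the operator norm (inherited from `B(G)`). -/
def BetaNormBounded (J : OperatorTensor E G) (β : ↥J.compactSpan →ₗ[ℂ] ℂ) : Prop :=
  ∃ C : ℝ, ∀ S : J.compactSpan, ‖β S‖ ≤ C * ‖(S : G →L[ℂ] G)‖

/-- A decoherence functional is tensor bounded if its associated functional `β`
on `K(𝔥) • K(𝔥)` is bounded for the (pre-)C*-norm. -/
def IsTensorBounded (J : OperatorTensor E G)
    (d : (E →L[ℂ] E) → (E →L[ℂ] E) → ℂ) : Prop :=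
  ∃ D, IsBoundedBilinear D ∧ ExtendsDF D d ∧
    ∃ β, IsBetaFor J D β ∧ BetaNormBounded J β

/-- `β` is uniformly bounded on the projections `p_ξ`, `ξ` a unit vector of the
algebraic tensor product `𝔥 ⊗_alg 𝔥`. -/
def BetaTraciallyBounded (J : OperatorTensor E G) (β : ↥J.compactSpan →ₗ[ℂ] ℂ) : Prop :=
  ∃ C : ℝ, ∀ ξ : G, ξ ∈ J.toHilbertTensorProduct.algSpan → ‖ξ‖ = 1 →
    ∀ hm : rankOneProj ξ ∈ J.compactSpan, ‖β ⟨rankOneProj ξ, hm⟩‖ ≤ C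

/-- A decoherence functional is tracially bounded if it is bounded and its
associated functional `β` is uniformly bounded on rank one projections `p_ξ`
with `ξ` a unit vector in `𝔥 ⊗_alg 𝔥`. -/
def IsTraciallyBounded (J : OperatorTensor E G)
    (d : (E →L[ℂ] E) → (E →L[ℂ] E) → ℂ) : Prop :=
  DFBounded d ∧ ∃ D, IsBoundedBilinear D ∧ ExtendsDF D d ∧
    ∃ β, IsBetaFor J D β ∧ BetaTraciallyBounded J β

section Helpers

open InnerProductSpace

theorem polar_zero {V : Type*} [NormedAddCommGroup V] [InnerProductSpace ℂ V] (f : V → V → ℂ)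
    (hal : ∀ a b c, f (a + b) c = f a c + f b c)
    (har : ∀ a b c, f a (b + c) = f a b + f a c)
    (hsl : ∀ (z : ℂ) a b, f (z • a) b = z * f a b)
    (hsr : ∀ (z : ℂ) a b, f a (z • b) = starRingEnd ℂ z * f a b)
    (h1 : ∀ v, ‖v‖ = 1 → f v v = 0) (a b : V) : f a b = 0 := by
  have h : ∀ v, f v v = 0 := by
    intro v
    by_cases hv : v = 0
    · subst hv
      have := hsl 0 0 0
      simpa using this
    · have hn : ((‖v‖ : ℝ) : ℂ) ≠ 0 := by simpa using hv
      have h2 := h1 (((‖v‖ : ℝ) : ℂ)⁻¹ • v) (norm_smul_inv_norm hv)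
      rw [hsl, hsr] at h2
      simpa [hv] using h2
  have e1 := h (a + b)
  have e2 := h (Complex.I • a + b)
  rw [hal, har, har, h, h] at e1
  rw [hal, har, har, h, h, hsl, hsr, Complex.conj_I] at e2
  have e3 : f b a = - f a b := by linear_combination e1
  rw [e3] at e2
  have : (2 * Complex.I) * f a b = 0 := by linear_combination e2
  simpa using this

/-- Double polarization. -/
theorem polar_two (ψ : E) (F : E → E → E → E → ℂ)
    (a1 : ∀ a a' b c d, F (a + a') b c d = F a b c d + F a' b c d)
    (s1 : ∀ (z : ℂ) a b c d, F (z • a) b c d = z * F a b c d)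
    (a2 : ∀ a b b' c d, F a (b + b') c d = F a b c d + F a b' c d)
    (s2 : ∀ (z : ℂ) a b c d, F a (z • b) c d = starRingEnd ℂ z * F a b c d)
    (a3 : ∀ a b c c' d, F a b (c + c') d = F a b c d + F a b c' d)
    (s3 : ∀ (z : ℂ) a b c d, F a b (z • c) d = z * F a b c d)
    (a4 : ∀ a b c d d', F a b c (d + d') = F a b c d + F a b c d')
    (s4 : ∀ (z : ℂ) a b c d, F a b c (z • d) = starRingEnd ℂ z * F a b c d)
    (h : ∀ v w : E, ‖v‖ = 1 → ‖w‖ = 1 → F v v w w = ⟪ψ, w⟫ * ⟪w, v⟫ * ⟪v, ψ⟫)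
    (a b c d : E) : F a b c d = ⟪ψ, c⟫ * ⟪d, a⟫ * ⟪b, ψ⟫ := by
  have key : ∀ w : E, ‖w‖ = 1 → ∀ a b, F a b w w = ⟪ψ, w⟫ * ⟪w, a⟫ * ⟪b, ψ⟫ := by
    intro w hw a b
    have := polar_zero (fun a b => F a b w w - ⟪ψ, w⟫ * ⟪w, a⟫ * ⟪b, ψ⟫)
      (by intros; simp only [a1, inner_add_right]; ring)
      (by intros; simp only [a2, inner_add_left]; ring)
      (by intros; simp only [s1, inner_smul_right]; ring)
      (by intros; simp only [s2, inner_smul_left]; ring)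
      (by intro v hv; simp only [h v w hv hw, sub_self]) a b
    exact sub_eq_zero.mp this
  have := polar_zero (fun c d => F a b c d - ⟪ψ, c⟫ * ⟪d, a⟫ * ⟪b, ψ⟫)
      (by intros; simp only [a3, inner_add_right]; ring)
      (by intros; simp only [a4, inner_add_left]; ring)
      (by intros; simp only [s3, inner_smul_right]; ring)
      (by intros; simp only [s4, inner_smul_left]; ring)
      (by intro v hv; simp only [key v hv, sub_self]) c d
  exact sub_eq_zero.mp this

theorem exists_orthonormal_fin (hinf : ¬ FiniteDimensional ℂ E) (n : ℕ) :
    ∃ e : Fin n → E, Orthonormal ℂ e := by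
  obtain ⟨w, b, -⟩ := exists_hilbertBasis ℂ E
  have hw : Infinite w := by
    by_contra hfin
    rw [not_infinite_iff_finite] at hfin
    have := Fintype.ofFinite w
    exact hinf b.toOrthonormalBasis.toBasis.finiteDimensional_of_finite
  exact ⟨fun i => b (Infinite.natEmbedding w i), b.orthonormal.comp _
    ((Infinite.natEmbedding w).injective.comp Fin.val_injective)⟩

theorem isOrthoProj_rankOne {v : E} (hv : ‖v‖ = 1) : IsOrthoProj (rankOne ℂ v v) :=
  ⟨(isStarProjection_rankOne_self hv).1, (isStarProjection_rankOne_self hv).2⟩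

theorem op_rankOne (J : OperatorTensor E G) (a b c d : E) :
    J.op (rankOne ℂ a b) (rankOne ℂ c d) = rankOne ℂ (J.tmul a c) (J.tmul b d) := by
  refine ContinuousLinearMap.ext_on J.dense_span ?_
  rintro _ ⟨⟨x, y⟩, rfl⟩
  simp [J.op_tmul, J.inner_tmul, smul_smul, mul_comm]

theorem isCompact_rankOne (a b : E) : IsCompactOperator (rankOne ℂ a b) := by
  rw [rankOne_def', ContinuousLinearMap.coe_comp]
  exact (isCompactOperator_of_locallyCompactSpace_dom (innerSL ℂ b)).clm_comp (toSpanSingleton ℂ a)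

theorem orthonormal_tmul_left (J : HilbertTensorProduct E G) {ψ : E} (hψ : ‖ψ‖ = 1)
    {n : ℕ} {e : Fin n → E} (he : Orthonormal ℂ e) :
    Orthonormal ℂ (fun i => J.tmul ψ (e i)) := by
  rw [orthonormal_iff_ite] at he ⊢
  intro i j
  rw [J.inner_tmul, he, inner_self_eq_norm_sq_to_K, hψ]
  simp

theorem orthonormal_tmul_right (J : HilbertTensorProduct E G) {ψ : E} (hψ : ‖ψ‖ = 1)
    {n : ℕ} {e : Fin n → E} (he : Orthonormal ℂ e) :
    Orthonormal ℂ (fun i => J.tmul (e i) ψ) := by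
  rw [orthonormal_iff_ite] at he ⊢
  intro i j
  rw [J.inner_tmul, he, inner_self_eq_norm_sq_to_K, hψ]
  simp

theorem norm_sum_rankOne_le {n : ℕ} {u v : Fin n → G} (hu : Orthonormal ℂ u)
    (hv : Orthonormal ℂ v) : ‖∑ i, rankOne ℂ (u i) (v i)‖ ≤ 1 := by
  refine ContinuousLinearMap.opNorm_le_bound _ zero_le_one fun z => ?_
  rw [one_mul]
  refine le_of_sq_le_sq ?_ (norm_nonneg _)
  refine le_trans (le_of_eq ?_) (hv.sum_inner_products_le z (s := Finset.univ))
  have h := hu.inner_sum (fun i => ⟪v i, z⟫) (fun i => ⟪v i, z⟫) Finset.univ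
  rw [inner_self_eq_norm_sq_to_K] at h
  simp only [ContinuousLinearMap.sum_apply, rankOne_apply]
  have h3 : ∀ i, starRingEnd ℂ ⟪v i, z⟫ * ⟪v i, z⟫ = ((‖⟪v i, z⟫‖ ^ 2 : ℝ) : ℂ) := by
    intro i
    rw [Complex.conj_mul']
    push_cast
    rfl
  simp only [h3] at h
  rw [← Complex.ofReal_sum] at h
  have h4 : ((‖∑ i, ⟪v i, z⟫ • u i‖ ^ 2 : ℝ) : ℂ) = ((∑ i, ‖⟪v i, z⟫‖ ^ 2 : ℝ) : ℂ) := by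
    rw [← h]; push_cast; rfl
  exact Complex.ofReal_injective h4

end Helpers

/-- For a unit vector `ψ` in a separable infinite dimensional
Hilbert space, the decoherence functional `d_ψ(p,q) = ⟨pψ, qψ⟩` is not
representable by any trace class operator on `𝔥 ⊗ 𝔥`; equivalently, `d_ψ` is
not tensor bounded. -/
theorem stmt_8 [TopologicalSpace.SeparableSpace E] (hinf : ¬ FiniteDimensional ℂ E)
    (ψ : E) (hψ : ‖ψ‖ = 1)
    (J : OperatorTensor E G) {ι : Type u} (bG : HilbertBasis ι ℂ G) :
    (¬ ∃ X : G →L[ℂ] G, IsTraceClass X ∧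
        ∀ p q : E →L[ℂ] E, IsOrthoProj p → IsOrthoProj q →
          (⟪q ψ, p ψ⟫ : ℂ) = traceAlong bG (J.op p q * X)) ∧
    ¬ IsTensorBounded J (fun p q : E →L[ℂ] E => ⟪q ψ, p ψ⟫) := by
  have hψψ : ⟪ψ, ψ⟫ = (1 : ℂ) := by rw [inner_self_eq_norm_sq_to_K, hψ]; simp
  constructor
  · rintro ⟨X, ⟨C, hC⟩, hX⟩
    have main : ∀ a b c d : E, ⟪J.tmul b d, X (J.tmul a c)⟫ = ⟪ψ, c⟫ * ⟪d, a⟫ * ⟪b, ψ⟫ := by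
      refine polar_two ψ (fun a b c d => ⟪J.tmul b d, X (J.tmul a c)⟫) ?_ ?_ ?_ ?_ ?_ ?_ ?_ ?_ ?_
      · intros; simp [inner_add_right]
      · intros; simp [inner_smul_right]
      · intros; simp [inner_add_left]
      · intros; simp [mul_comm]
      · intros; simp [inner_add_right]
      · intros; simp [inner_smul_right]
      · intros; simp [inner_add_left]
      · intros; simp [mul_comm]
      · intro v w hv hw
        have h := hX _ _ (isOrthoProj_rankOne hv) (isOrthoProj_rankOne hw)
        rw [op_rankOne, traceAlong] at h
        have h2 := bG.tsum_inner_mul_inner (adjoint X (J.tmul v w)) (J.tmul v w)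
        rw [adjoint_inner_left] at h2
        rw [← h2]
        have h3 : ∀ i, ⟪bG i, (InnerProductSpace.rankOne ℂ (J.tmul v w) (J.tmul v w) * X) (bG i)⟫
            = ⟪adjoint X (J.tmul v w), bG i⟫ * ⟪bG i, J.tmul v w⟫ := by
          intro i
          rw [adjoint_inner_left, ContinuousLinearMap.mul_apply,
            InnerProductSpace.rankOne_apply, inner_smul_right]
        simp only [h3] at h
        rw [← h]
        simp only [InnerProductSpace.rankOne_apply, inner_smul_left, inner_smul_right,
          inner_conj_symm]
        ring
    obtain ⟨n, hn⟩ := exists_nat_gt C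
    obtain ⟨e, he⟩ := exists_orthonormal_fin hinf n
    have h := hC n _ _ (orthonormal_tmul_left J.toHilbertTensorProduct hψ he)
      (orthonormal_tmul_right J.toHilbertTensorProduct hψ he)
    have hee : ∀ i, ⟪e i, e i⟫ = (1 : ℂ) := fun i => by
      rw [inner_self_eq_norm_sq_to_K, he.1 i]; simp
    simp only [main, hψψ, hee] at h
    simp at h
    linarith
  · rintro ⟨D, -, hD, β, hβ, C, hC⟩
    have main : ∀ a b c d : E, D (InnerProductSpace.rankOne ℂ a b) (InnerProductSpace.rankOne ℂ c d)
        = ⟪ψ, c⟫ * ⟪d, a⟫ * ⟪b, ψ⟫ := by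
      refine polar_two ψ (fun a b c d => D (InnerProductSpace.rankOne ℂ a b)
        (InnerProductSpace.rankOne ℂ c d)) ?_ ?_ ?_ ?_ ?_ ?_ ?_ ?_ ?_
      iterate 8 · intros; simp
      · intro v w hv hw
        have h := hD _ _ (isOrthoProj_rankOne hv) (isOrthoProj_rankOne hw)
        simp only [h, InnerProductSpace.rankOne_apply, inner_smul_left, inner_smul_right,
          inner_conj_symm]
        ring
    obtain ⟨n, hn⟩ := exists_nat_gt (max C 0)
    obtain ⟨e, he⟩ := exists_orthonormal_fin hinf n
    have hee : ∀ i, ⟪e i, e i⟫ = (1 : ℂ) := fun i => by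
      rw [inner_self_eq_norm_sq_to_K, he.1 i]; simp
    have hmem : ∀ i, J.op (InnerProductSpace.rankOne ℂ (e i) ψ)
        (InnerProductSpace.rankOne ℂ ψ (e i)) ∈ J.compactSpan := fun i =>
      Submodule.subset_span ⟨_, _, isCompact_rankOne _ _, isCompact_rankOne _ _, rfl⟩
    have h := hC (∑ i, ⟨_, hmem i⟩)
    have h1 : β (∑ i, ⟨_, hmem i⟩) = n := by
      rw [map_sum]
      simp only [hβ _ _ (isCompact_rankOne _ _) (isCompact_rankOne _ _), main, hψψ, hee]
      simp
    have h2 : ‖((∑ i, ⟨_, hmem i⟩ : J.compactSpan) : G →L[ℂ] G)‖ ≤ 1 := by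
      rw [Submodule.coe_sum]
      simp only [op_rankOne]
      exact norm_sum_rankOne_le (orthonormal_tmul_right J.toHilbertTensorProduct hψ he)
        (orthonormal_tmul_left J.toHilbertTensorProduct hψ he)
    rw [h1, Complex.norm_natCast] at h
    have h4 : C * ‖((∑ i, ⟨_, hmem i⟩ : J.compactSpan) : G →L[ℂ] G)‖ ≤ max C 0 * 1 :=
      mul_le_mul (le_max_left _ _) h2 (norm_nonneg _) (le_max_right _ _)
    linarith
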